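/- With u : ℕ₀ → K defined by the digit construction: (a) u(n) = 0 if and only if n = 0, and for every integer k ≥ 1, |u(n)| = q^k if and only if q^{k−1} ≤ n < q^k; (b) {u(n) : n ∈ ℕ₀} = {−u(n) : n ∈ ℕ₀}; (c) for each fixed m ∈ ℕ₀, {u(m) + u(n) : n ∈ ℕ₀} = {u(n) : n ∈ ℕ₀}. Consequently {u(n) : n ∈ ℕ₀} is a subgroup of K⁺. -/

import Mathlib

open Complex Set Filter Topology

noncomputable section

/-- A local field of positive characteristic, with its standard data:
the absolute value (the norm), a prime element `π`, residue field of cardinality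
`q = p ^ c`, the normalized Haar measure `μ`, and the fixed character `χ`
(trivial on the ring of integers `{x | ‖x‖ ≤ 1}`, nontrivial on `π⁻¹𝔇`). -/
structure LFPCBase where
  K : Type
  [instNorm : NormedField K]
  [instMeas : MeasurableSpace K]
  [instBorel : BorelSpace K]
  locallyCompact : LocallyCompactSpace K
  complete : CompleteSpace K
  nondiscrete : ∃ x : K, x ≠ 0 ∧ ‖x‖ ≠ 1
  totallyDisconnected : TotallyDisconnectedSpace K
  p : ℕ
  hp : p.Prime
  charP : CharP K p
  ultrametric : ∀ x y : K, ‖x + y‖ ≤ max ‖x‖ ‖y‖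
  c : ℕ
  hc : 0 < c
  q : ℕ
  hq : q = p ^ c
  valuation_range : ∀ x : K, x ≠ 0 → ∃ s : ℤ, ‖x‖ = (q : ℝ) ^ s
  π : K
  hπ : ‖π‖ = (q : ℝ)⁻¹
  μ : MeasureTheory.Measure K
  μ_left_invariant : μ.IsAddLeftInvariant
  μ_D : μ {x : K | ‖x‖ ≤ 1} = 1
  μ_scale : ∀ a : K, a ≠ 0 → ∀ s : Set K,
    μ ((fun x => a * x) '' s) = ENNReal.ofReal ‖a‖ * μ s
  χ : K → ℂ
  χ_add : ∀ x y : K, χ (x + y) = χ x * χ y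
  χ_unitary : ∀ x : K, ‖χ x‖ = 1
  χ_continuous : Continuous χ
  χ_trivial : ∀ x : K, ‖x‖ ≤ 1 → χ x = 1
  χ_nontrivial : ∃ x : K, ‖x‖ ≤ (q : ℝ) ∧ χ x ≠ 1

attribute [instance] LFPCBase.instNorm LFPCBase.instMeas LFPCBase.instBorel

open MeasureTheory

namespace LFPCBase

variable (C : LFPCBase)

/-- The ring of integers `𝔇 = {x : K | ‖x‖ ≤ 1}`. -/
def D : Set C.K := {x : C.K | ‖x‖ ≤ 1}

end LFPCBase

/-!
Splitting off the lowest base-`q` digit turns the definition of `u` into the single recursion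
`u n = u (n % q) + π⁻¹ * u (n / q)`, and everything is proved by recursion on `n / q`. By linear
independence of the `ε k` in the residue field, `‖u n‖ = ‖π⁻¹‖` for `0 < n < q`, so in the
ultrametric norm the top digit dominates and `‖u n‖ = ‖π⁻¹‖ ^ (log_q n + 1)`. Addition has no
carries: in characteristic `p` the coefficients of the `ε k` add modulo `p`, so the values of `u`
form an additive submonoid, and this is a subgroup because `p x = 0`, i.e. `-x = (p - 1) x`.
-/

section NatDigits

variable {b c : ℕ}

theorem exists_lt_pow_forall_div_pow_mod_eq {a : ℕ → ℕ} (ha : ∀ k < c, a k < b) :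
    ∃ n < b ^ c, ∀ k < c, n / b ^ k % b = a k := by
  let digits : Fin c → Fin b := fun k => ⟨a k, ha k k.is_lt⟩
  refine ⟨finFunctionFinEquiv digits, Fin.is_lt _, fun k hk => ?_⟩
  exact congrArg Fin.val (congrFun (finFunctionFinEquiv.symm_apply_apply digits) ⟨k, hk⟩)

theorem eq_of_forall_div_pow_mod_eq {m n : ℕ} (hm : m < b ^ c) (hn : n < b ^ c)
    (h : ∀ k < c, m / b ^ k % b = n / b ^ k % b) : m = n :=
  congrArg Fin.val <| finFunctionFinEquiv.symm.injective
    (a₁ := ⟨m, hm⟩) (a₂ := ⟨n, hn⟩) <| funext fun k => Fin.ext (h k k.is_lt)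

end NatDigits

/-- The combination `∑ k < c, aₖ * ε k` whose coefficients are the base-`p` digits `aₖ` of `n`.
For `n < q = p ^ c` it represents the `n`-th element of the residue field `GF(q)`; digits of `n`
beyond the first `c` are ignored. -/
def digitCombination {R : Type*} [Semiring R] (p c : ℕ) (ε : ℕ → R) (n : ℕ) : R :=
  ∑ k ∈ Finset.range c, ((n / p ^ k % p : ℕ) : R) * ε k

section DigitCombination

variable {p c : ℕ}

theorem digitCombination_zero {R : Type*} [Semiring R] (ε : ℕ → R) :
    digitCombination p c ε 0 = 0 := by
  simp [digitCombination]

theorem exists_digitCombination_eq_add {R : Type*} [Semiring R] [CharP R p] (hp : 0 < p)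
    (ε : ℕ → R) (m n : ℕ) :
    ∃ e < p ^ c,
      digitCombination p c ε e = digitCombination p c ε m + digitCombination p c ε n := by
  obtain ⟨e, he, digit_e⟩ := exists_lt_pow_forall_div_pow_mod_eq (c := c)
    (a := fun k => (m / p ^ k % p + n / p ^ k % p) % p) fun k _ => Nat.mod_lt _ hp
  refine ⟨e, he, ?_⟩
  simp only [digitCombination, ← Finset.sum_add_distrib]
  refine Finset.sum_congr rfl fun k hk => ?_
  rw [digit_e k (Finset.mem_range.1 hk), CharP.natCast_eq_natCast_mod R p (_ % p), Nat.mod_mod,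
    ← CharP.natCast_eq_natCast_mod, Nat.cast_add, add_mul]

theorem norm_digitCombination {R : Type*} [NormedRing R] [NormOneClass R] [IsUltrametricDist R]
    {ε : ℕ → R} (hε_mem : ∀ k < c, ‖ε k‖ ≤ 1)
    (hε_indep : ∀ a : ℕ → ℕ, (∀ k < c, a k < p) →
      ‖∑ k ∈ Finset.range c, (a k : R) * ε k‖ < 1 → ∀ k < c, a k = 0)
    (hp : 0 < p) {n : ℕ} (hn : n < p ^ c) (hn₀ : n ≠ 0) :
    ‖digitCombination p c ε n‖ = 1 := by
  apply le_antisymm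
  · refine IsUltrametricDist.norm_sum_le_of_forall_le_of_nonneg zero_le_one fun k hk => ?_
    exact (norm_mul_le _ _).trans <| mul_le_one₀ (IsUltrametricDist.norm_natCast_le_one _ _)
      (norm_nonneg _) (hε_mem k (Finset.mem_range.1 hk))
  · by_contra! norm_lt
    have digits_zero := hε_indep _ (fun k _ => Nat.mod_lt _ hp) norm_lt
    refine hn₀ (eq_of_forall_div_pow_mod_eq hn (Nat.zero_lt_of_lt hn) fun k hk => ?_)
    rw [digits_zero k hk, Nat.zero_div, Nat.zero_mod]

end DigitCombination

/-- `u` is a digit map of base `q` and weight `t`: if `n = ∑ bₖ * q ^ k` with `0 ≤ bₖ < q`, then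
`u n = ∑ t ^ k * u bₖ`. This is encoded by splitting off the lowest digit. -/
structure IsDigitMap {R : Type*} [Semiring R] (q : ℕ) (t : R) (u : ℕ → R) : Prop where
  zero : u 0 = 0
  eq_mod_add_mul_div : ∀ n, u n = u (n % q) + t * u (n / q)

namespace IsDigitMap

section Semiring

variable {R : Type*} [Semiring R] {q : ℕ} {t : R} {u : ℕ → R}

theorem sum_digits_eq_of_lt (hq : 1 < q) (hu₀ : u 0 = 0) {n N : ℕ} (hN : n < N) :
    ∑ k ∈ Finset.range N, t ^ k * u (n / q ^ k % q) =
      ∑ k ∈ Finset.range (n + 1), t ^ k * u (n / q ^ k % q) := by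
  refine (Finset.sum_subset (Finset.range_subset_range.2 hN) fun k _ hk => ?_).symm
  have n_lt_k : n < k := by simpa using hk
  have n_lt : n < q ^ k := n_lt_k.trans (Nat.lt_pow_self hq)
  rw [Nat.div_eq_of_lt n_lt, Nat.zero_mod, hu₀, mul_zero]

theorem of_eq_sum_digits (hq : 1 < q) (hu₀ : u 0 = 0)
    (hu : ∀ n, q ≤ n → u n = ∑ k ∈ Finset.range (n + 1), t ^ k * u (n / q ^ k % q)) :
    IsDigitMap q t u := by
  have u_eq_sum (n : ℕ) : u n = ∑ k ∈ Finset.range (n + 1), t ^ k * u (n / q ^ k % q) := by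
    rcases lt_or_ge n q with hn | hn
    · rw [Finset.sum_range_succ', Finset.sum_eq_zero]
      · simp [Nat.mod_eq_of_lt hn]
      · intro k _
        rw [Nat.div_eq_of_lt (hn.trans_le (Nat.le_self_pow k.succ_ne_zero q)), Nat.zero_mod,
          hu₀, mul_zero]
    · exact hu n hn
  refine ⟨hu₀, fun n => ?_⟩
  rcases lt_or_ge n q with hn | hn
  · rw [Nat.mod_eq_of_lt hn, Nat.div_eq_of_lt hn, hu₀, mul_zero, add_zero]
  · have div_lt : n / q < n := Nat.div_lt_self (by lia) hq
    rw [u_eq_sum n, Finset.sum_range_succ', u_eq_sum (n / q), ← sum_digits_eq_of_lt hq hu₀ div_lt,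
      Finset.mul_sum, add_comm]
    simp only [Nat.div_div_eq_div_mul, ← pow_succ', ← mul_assoc, pow_zero, Nat.div_one, one_mul]

theorem apply_add_mul (h : IsDigitMap q t u) {e : ℕ} (he : e < q) (f : ℕ) :
    u (e + q * f) = u e + t * u f := by
  rw [h.eq_mod_add_mul_div, Nat.add_mul_mod_self_left, Nat.mod_eq_of_lt he,
    Nat.add_mul_div_left _ _ (Nat.zero_lt_of_lt he), Nat.div_eq_of_lt he, zero_add]

theorem exists_eq_add (h : IsDigitMap q t u) (hq : 1 < q)
    (hdigit : ∀ a < q, ∀ b < q, ∃ e < q, u e = u a + u b) (m n : ℕ) :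
    ∃ e, u e = u m + u n := by
  induction m using Nat.strong_induction_on generalizing n with
  | _ m ih =>
    rcases eq_or_ne m 0 with rfl | hm
    · exact ⟨n, by rw [h.zero, zero_add]⟩
    · have hq₀ : 0 < q := zero_lt_one.trans hq
      obtain ⟨f, hf⟩ := ih (m / q) (Nat.div_lt_self (Nat.pos_of_ne_zero hm) hq) (n / q)
      obtain ⟨e, he, hue⟩ := hdigit (m % q) (Nat.mod_lt _ hq₀) (n % q) (Nat.mod_lt _ hq₀)
      refine ⟨e + q * f, ?_⟩
      rw [h.apply_add_mul he, hue, hf, mul_add, h.eq_mod_add_mul_div m, h.eq_mod_add_mul_div n,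
        add_add_add_comm]

end Semiring

theorem exists_addSubgroup_coe_eq_range {R : Type*} [Ring R] {p q : ℕ} [CharP R p] {t : R}
    {u : ℕ → R} (h : IsDigitMap q t u) (hp : 0 < p) (hq : 1 < q)
    (hdigit : ∀ a < q, ∀ b < q, ∃ e < q, u e = u a + u b) :
    ∃ H : AddSubgroup R, (H : Set R) = Set.range u := by
  let S : AddSubmonoid R :=
    { carrier := Set.range u
      zero_mem' := ⟨0, h.zero⟩
      add_mem' := by
        rintro _ _ ⟨m, rfl⟩ ⟨n, rfl⟩
        exact h.exists_eq_add hq hdigit m n }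
  refine ⟨{ S with neg_mem' := fun {x} (hx : x ∈ S) => ?_ }, rfl⟩
  have finite_order : IsOfFinAddOrder x :=
    isOfFinAddOrder_iff_nsmul_eq_zero.2 ⟨p, hp, by rw [nsmul_eq_mul, CharP.cast_eq_zero, zero_mul]⟩
  have neg_mem_multiples : -x ∈ AddSubmonoid.multiples x :=
    finite_order.mem_multiples_iff_mem_zmultiples.2
      (neg_mem (AddSubgroup.mem_zmultiples x))
  exact AddSubmonoid.multiples_le.2 hx neg_mem_multiples

section Norm

variable {R : Type*} [NormedRing R] [NormMulClass R] [IsUltrametricDist R] {q : ℕ} {t : R}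
  {u : ℕ → R}

theorem norm_eq_pow_log_add_one (h : IsDigitMap q t u) (hq : 1 < q) (ht : 1 < ‖t‖)
    (hdigit : ∀ n < q, n ≠ 0 → ‖u n‖ = ‖t‖) {n : ℕ} (hn : n ≠ 0) :
    ‖u n‖ = ‖t‖ ^ (Nat.log q n + 1) := by
  induction n using Nat.strong_induction_on with
  | _ n ih =>
    rcases lt_or_ge n q with hnq | hqn
    · rw [hdigit n hnq hn, Nat.log_of_lt hnq, zero_add, pow_one]
    · have norm_mod_le : ‖u (n % q)‖ ≤ ‖t‖ := by
        rcases eq_or_ne (n % q) 0 with h₀ | h₀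
        · rw [h₀, h.zero, norm_zero]
          exact norm_nonneg t
        · exact (hdigit _ (Nat.mod_lt _ (zero_lt_one.trans hq)) h₀).le
      have norm_mul_div : ‖t * u (n / q)‖ = ‖t‖ ^ (Nat.log q n + 1) := by
        rw [norm_mul, ih (n / q) (Nat.div_lt_self (Nat.pos_of_ne_zero hn) hq)
          (Nat.div_pos hqn (zero_lt_one.trans hq)).ne', ← pow_succ',
          ← Nat.log_of_one_lt_of_le hq hqn]
      have lowest_lt : ‖u (n % q)‖ < ‖t * u (n / q)‖ := by
        rw [norm_mul_div]
        refine norm_mod_le.trans_lt (lt_self_pow₀ ht ?_)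
        exact Nat.lt_add_of_pos_left (Nat.log_pos hq hqn)
      rw [h.eq_mod_add_mul_div, IsUltrametricDist.norm_add_eq_max_of_norm_ne_norm lowest_lt.ne,
        max_eq_right lowest_lt.le, norm_mul_div]

theorem eq_zero_iff (h : IsDigitMap q t u) (hq : 1 < q) (ht : 1 < ‖t‖)
    (hdigit : ∀ n < q, n ≠ 0 → ‖u n‖ = ‖t‖) {n : ℕ} : u n = 0 ↔ n = 0 := by
  refine ⟨fun hun => by_contra fun hn => ?_, fun hn => hn ▸ h.zero⟩
  have norm_pos : 0 < ‖u n‖ :=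
    h.norm_eq_pow_log_add_one hq ht hdigit hn ▸ pow_pos (zero_lt_one.trans ht) _
  exact norm_pos_iff.1 norm_pos hun

theorem norm_eq_pow_add_one_iff (h : IsDigitMap q t u) (hq : 1 < q) (ht : 1 < ‖t‖)
    (hdigit : ∀ n < q, n ≠ 0 → ‖u n‖ = ‖t‖) {k n : ℕ} :
    ‖u n‖ = ‖t‖ ^ (k + 1) ↔ q ^ k ≤ n ∧ n < q ^ (k + 1) := by
  rcases eq_or_ne n 0 with rfl | hn
  · have pow_ne : (0 : ℝ) ≠ ‖t‖ ^ (k + 1) := (pow_pos (zero_lt_one.trans ht) _).ne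
    have not_pow_le : ¬ q ^ k ≤ 0 := (pow_pos (zero_lt_one.trans hq) k).not_ge
    simp only [h.zero, norm_zero, pow_ne, not_pow_le, false_and]
  · rw [h.norm_eq_pow_log_add_one hq ht hdigit hn,
      pow_right_inj₀ (zero_lt_one.trans ht) ht.ne', Nat.add_right_cancel_iff,
      Nat.log_eq_iff (Or.inr ⟨hq, hn⟩)]

end Norm

end IsDigitMap

section AddSubgroupRange

variable {G ι : Type*} [AddGroup G] {H : AddSubgroup G} {u : ι → G}

theorem range_eq_range_neg_of_coe_eq_range (hH : (H : Set G) = Set.range u) :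
    Set.range u = Set.range fun n => -u n := by
  rw [← Set.neg_range, ← hH, neg_coe_set]

open scoped Pointwise in
theorem range_add_left_eq_range_of_coe_eq_range (hH : (H : Set G) = Set.range u) (m : ι) :
    (Set.range fun n => u m + u n) = Set.range u := by
  have mem_H : u m ∈ H := SetLike.mem_coe.1 (hH ▸ Set.mem_range_self m)
  calc (Set.range fun n => u m + u n) = u m +ᵥ Set.range u := (Set.vadd_set_range (u m) u).symm
    _ = Set.range u := by rw [← hH, vadd_coe_set mem_H]

end AddSubgroupRange

theorem statement1_general {K : Type*} [NormedDivisionRing K] [IsUltrametricDist K]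
    {p c q : ℕ} [CharP K p] (hp : p.Prime) (hc : 0 < c) (hq : q = p ^ c)
    {π : K} {r : ℝ} (hr : 1 < r) (hπ : ‖π‖ = r⁻¹)
    {ε : ℕ → K} (hε_mem : ∀ k < c, ‖ε k‖ ≤ 1)
    (hε_indep : ∀ a : ℕ → ℕ, (∀ k < c, a k < p) →
      ‖∑ k ∈ Finset.range c, (a k : K) * ε k‖ < 1 → ∀ k < c, a k = 0)
    {u : ℕ → K}
    (hu_base : ∀ n, n < q →
      u n = (∑ k ∈ Finset.range c, ((n / p ^ k % p : ℕ) : K) * ε k) * π⁻¹)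
    (hu_rec : ∀ n : ℕ, q ≤ n →
      u n = ∑ k ∈ Finset.range (n + 1), π ^ (-(k : ℤ)) * u (n / q ^ k % q)) :
    ((∀ n : ℕ, u n = 0 ↔ n = 0) ∧
      (∀ k : ℕ, 1 ≤ k → ∀ n : ℕ, ‖u n‖ = r ^ k ↔ (q ^ (k - 1) ≤ n ∧ n < q ^ k))) ∧
    (Set.range u = Set.range fun n => -u n) ∧
    (∀ m : ℕ, (Set.range fun n => u m + u n) = Set.range u) ∧
    (∃ H : AddSubgroup K, (H : Set K) = Set.range u) := by
  have hq₁ : 1 < q := hq ▸ Nat.one_lt_pow hc.ne' hp.one_lt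
  have hu_digit (n : ℕ) (hn : n < q) : u n = digitCombination p c ε n * π⁻¹ := hu_base n hn
  have hu₀ : u 0 = 0 := by
    rw [hu_digit 0 (zero_lt_one.trans hq₁), digitCombination_zero, zero_mul]
  have isDigitMap : IsDigitMap q π⁻¹ u := .of_eq_sum_digits hq₁ hu₀ fun n hn => by
    simpa only [zpow_neg, zpow_natCast, inv_pow] using hu_rec n hn
  have norm_inv_π : ‖π⁻¹‖ = r := by rw [norm_inv, hπ, inv_inv]
  have ht : 1 < ‖π⁻¹‖ := norm_inv_π.symm ▸ hr
  have norm_digit (n : ℕ) (hn : n < q) (hn₀ : n ≠ 0) : ‖u n‖ = ‖π⁻¹‖ := by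
    rw [hu_digit n hn, norm_mul,
      norm_digitCombination hε_mem hε_indep hp.pos (hq ▸ hn) hn₀, one_mul]
  have add_digit (a : ℕ) (ha : a < q) (b : ℕ) (hb : b < q) : ∃ e < q, u e = u a + u b := by
    obtain ⟨e, he, h⟩ := exists_digitCombination_eq_add (c := c) hp.pos ε a b
    exact ⟨e, hq ▸ he, by rw [hu_digit e (hq ▸ he), h, add_mul, ← hu_digit a ha, ← hu_digit b hb]⟩
  obtain ⟨H, hH⟩ := isDigitMap.exists_addSubgroup_coe_eq_range hp.pos hq₁ add_digit
  refine ⟨⟨fun n => isDigitMap.eq_zero_iff hq₁ ht norm_digit, fun k hk n => ?_⟩,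
    range_eq_range_neg_of_coe_eq_range hH, range_add_left_eq_range_of_coe_eq_range hH, H, hH⟩
  obtain ⟨k, rfl⟩ := Nat.exists_eq_add_of_le' hk
  rw [← norm_inv_π, isDigitMap.norm_eq_pow_add_one_iff hq₁ ht norm_digit, Nat.add_sub_cancel]

/-- Properties of the map `u : ℕ₀ → K` defined by the digit
construction: for `0 ≤ n < q`, writing `n = ∑_{k<c} a_k p^k` (`0 ≤ a_k < p`),
`u n = (∑_{k<c} a_k ε_k) π⁻¹`; for general `n`, writing `n = ∑_k b_k q^k`
(`0 ≤ b_k < q`), `u n = ∑_k π^{-k} u (b_k)`.  Then: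
(a) `u n = 0 ↔ n = 0`, and for `k ≥ 1`, `‖u n‖ = q ^ k ↔ q^{k-1} ≤ n < q^k`;
(b) `{u n} = {-u n}`; (c) for each `m`, `{u m + u n : n} = {u n : n}`.
Consequently `{u n : n ∈ ℕ₀}` is (the carrier of) an additive subgroup of `K⁺`. -/
theorem statement1 (C : LFPCBase) (ε : ℕ → C.K)
    (hε0 : ε 0 = 1)
    (hε_mem : ∀ k, k < C.c → ‖ε k‖ ≤ 1)
    -- the images of `ε 0, …, ε (c-1)` in the residue field `𝔇/𝔅 ≅ GF(q)` are
    -- linearly independent over `GF(p)` …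
    (hε_indep : ∀ a : ℕ → ℕ, (∀ k, k < C.c → a k < C.p) →
        (‖∑ k ∈ Finset.range C.c, (a k : C.K) * ε k‖ < 1 ↔ ∀ k, k < C.c → a k = 0))
    -- … and they span it
    (hε_span : ∀ x : C.K, ‖x‖ ≤ 1 → ∃ a : ℕ → ℕ, (∀ k, k < C.c → a k < C.p) ∧
        ‖x - ∑ k ∈ Finset.range C.c, (a k : C.K) * ε k‖ < 1)
    (u : ℕ → C.K)
    -- the digit definition of `u n` for `0 ≤ n < q`
    (hu_base : ∀ n, n < C.q →
        u n = (∑ k ∈ Finset.range C.c, ((n / C.p ^ k % C.p : ℕ) : C.K) * ε k) * C.π⁻¹)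
    -- the digit definition of `u n` for `n ≥ q`, via base-`q` digits
    (hu_rec : ∀ n : ℕ, C.q ≤ n →
        u n = ∑ k ∈ Finset.range (n + 1), C.π ^ (-(k : ℤ)) * u (n / C.q ^ k % C.q)) :
    -- (a)
    ((∀ n : ℕ, u n = 0 ↔ n = 0) ∧
      (∀ k : ℕ, 1 ≤ k → ∀ n : ℕ,
        ‖u n‖ = (C.q : ℝ) ^ k ↔ (C.q ^ (k - 1) ≤ n ∧ n < C.q ^ k))) ∧
    -- (b)
    (Set.range u = Set.range fun n => -u n) ∧
    -- (c)
    (∀ m : ℕ, (Set.range fun n => u m + u n) = Set.range u) ∧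
    -- consequently, `{u n : n ∈ ℕ₀}` is a subgroup of `K⁺`
    (∃ H : AddSubgroup C.K, (H : Set C.K) = Set.range u) := by
  have := C.charP
  have : IsUltrametricDist C.K := .isUltrametricDist_of_forall_norm_add_le_max_norm C.ultrametric
  exact statement1_general C.hp C.hc C.hq
    (Nat.one_lt_cast.2 (C.hq ▸ Nat.one_lt_pow C.hc.ne' C.hp.one_lt)) C.hπ hε_mem
    (fun a ha => (hε_indep a ha).1) hu_base hu_rec
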